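/- arXiv:1402.2092 — 2 statements merged into one kernel-verified Lean document; each statement's English description precedes it below -/
import Mathlib

section
/- In the crowd-teaching setting, suppose E > 0, 0 < P0(h*)·ε < 2E, and suppose there exists a set of cardinality k with F-value at least E − P0(h*)·ε/2, where E = Σ_{h∈H} P0(h)·err(h,h*). Let A_ℓ be the set produced by ℓ iterations of greedy maximization of F starting from the empty set. Then for every integer ℓ ≥ k · ln(2E/(P0(h*)·ε)) one has F(A_ℓ) ≥ E − P0(h*)·ε. -/
open scoped Classical BigOperators

/-!
Discounting a hypothesis by factors in `[0, 1]` makes `A ↦ 1 - ∏ x ∈ A, w x` monotone and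
submodular, hence so is the surrogate, a nonnegative combination of such functions. For a monotone
submodular function the marginal gains at `A` of the elements of a set `B` add up to at least
`F B - F A`, so each greedy step closes at least the fraction `1 / #B` of the gap to `F B`. After
`ℓ` steps the gap is at most `exp (-ℓ / #B)` times the initial one, which itself is at most `E`; for
`ℓ ≥ #B * log (2 * E / δ)` this is at most `δ / 2`, the other `δ / 2` being lost by `B` itself.
-/

section Submodular

variable {α β ι : Type*} [Lattice α]

/-- Submodularity of a function on a lattice, in the union–intersection form; on finsets it
expresses diminishing returns. -/
def IsSubmodular [Add β] [LE β] (f : α → β) : Prop :=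
  ∀ a b, f (a ⊔ b) + f (a ⊓ b) ≤ f a + f b

theorem IsSubmodular.sum [AddCommMonoid β] [PartialOrder β] [IsOrderedAddMonoid β]
    {s : Finset ι} {f : ι → α → β} (hf : ∀ i ∈ s, IsSubmodular (f i)) :
    IsSubmodular fun a => ∑ i ∈ s, f i a := fun a b => by
  simp only [← Finset.sum_add_distrib]
  exact Finset.sum_le_sum fun i hi => hf i hi a b

theorem IsSubmodular.const_mul [NonUnitalNonAssocSemiring β] [Preorder β] [PosMulMono β]
    {f : α → β} (hf : IsSubmodular f) {c : β} (hc : 0 ≤ c) : IsSubmodular fun a => c * f a :=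
  fun a b => by
    simp only [← mul_add]
    exact mul_le_mul_of_nonneg_left (hf a b) hc

theorem IsSubmodular.sub_le_sum_insert_sub {X : Type*} [DecidableEq X] [AddCommGroup β]
    [PartialOrder β] [IsOrderedAddMonoid β] {F : Finset X → β} (hF : IsSubmodular F)
    (hmono : Monotone F) (A B : Finset X) :
    F (A ∪ B) - F A ≤ ∑ x ∈ B, (F (insert x A) - F A) := by
  induction B using Finset.induction_on with
  | empty => simp
  | insert b B hb ih =>
    have hunion : A ∪ B ∪ insert b A = A ∪ insert b B := by grind
    have hinter : F A ≤ F ((A ∪ B) ∩ insert b A) :=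
      hmono (Finset.subset_inter Finset.subset_union_left (Finset.subset_insert b A))
    have hmarginal : F (A ∪ insert b B) - F (A ∪ B) ≤ F (insert b A) - F A := by
      rw [sub_le_sub_iff, ← hunion, add_comm (F (insert b A))]
      exact (add_le_add_right hinter _).trans (hF (A ∪ B) (insert b A))
    calc F (A ∪ insert b B) - F A
        = (F (A ∪ insert b B) - F (A ∪ B)) + (F (A ∪ B) - F A) := (sub_add_sub_cancel _ _ _).symm
      _ ≤ (F (insert b A) - F A) + ∑ x ∈ B, (F (insert x A) - F A) := add_le_add hmarginal ih
      _ = ∑ x ∈ insert b B, (F (insert x A) - F A) := by rw [Finset.sum_insert hb]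

end Submodular

section Greedy

variable {X R : Type*} [DecidableEq X]

/-- `A 0, A 1, …` is a run of greedy maximization of `F` from the empty set. As in `argmax` over all
of `X`, the inserted element may already belong to `A t`, in which case the run stalls. -/
structure IsGreedySequence [LE R] (F : Finset X → R) (A : ℕ → Finset X) : Prop where
  zero : A 0 = ∅
  step : ∀ t, ∃ x, A (t + 1) = insert x (A t) ∧ ∀ z, F (insert z (A t)) ≤ F (insert x (A t))

namespace IsGreedySequence

variable {A : ℕ → Finset X}

theorem monotone [LE R] {F : Finset X → R} (hA : IsGreedySequence F A) : Monotone A :=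
  monotone_nat_of_le_succ fun t => by
    obtain ⟨x, hx, -⟩ := hA.step t
    exact hx ▸ Finset.subset_insert x (A t)

theorem sub_le_card_mul_sub [Ring R] [PartialOrder R] [IsOrderedRing R] {F : Finset X → R}
    (hA : IsGreedySequence F A) (hmono : Monotone F) (hF : IsSubmodular F) (B : Finset X) (t : ℕ) :
    F B - F (A t) ≤ B.card * (F (A (t + 1)) - F (A t)) := by
  obtain ⟨x, hx, hmax⟩ := hA.step t
  calc F B - F (A t)
      ≤ F (A t ∪ B) - F (A t) := sub_le_sub_right (hmono Finset.subset_union_right) _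
    _ ≤ ∑ z ∈ B, (F (insert z (A t)) - F (A t)) := hF.sub_le_sum_insert_sub hmono _ _
    _ ≤ ∑ _z ∈ B, (F (A (t + 1)) - F (A t)) :=
        Finset.sum_le_sum fun z _ => sub_le_sub_right (hx ▸ hmax z) _
    _ = B.card * (F (A (t + 1)) - F (A t)) := by rw [Finset.sum_const, nsmul_eq_mul]

variable [Field R] [LinearOrder R] [IsStrictOrderedRing R] {F : Finset X → R}

-- For `B = ∅` the convention `1 / 0 = 0` makes this the monotonicity of `F` along the run.
theorem sub_succ_le (hA : IsGreedySequence F A) (hmono : Monotone F) (hF : IsSubmodular F)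
    (B : Finset X) (t : ℕ) :
    F B - F (A (t + 1)) ≤ (1 - 1 / (B.card : R)) * (F B - F (A t)) := by
  have hgain : (F B - F (A t)) / B.card ≤ F (A (t + 1)) - F (A t) :=
    div_le_of_le_mul₀ (Nat.cast_nonneg _) (sub_nonneg.2 (hmono (hA.monotone t.le_succ)))
      (mul_comm (B.card : R) _ ▸ hA.sub_le_card_mul_sub hmono hF B t)
  linear_combination hgain

theorem sub_le_pow_mul (hA : IsGreedySequence F A) (hmono : Monotone F) (hF : IsSubmodular F)
    (B : Finset X) (ℓ : ℕ) :
    F B - F (A ℓ) ≤ (1 - 1 / (B.card : R)) ^ ℓ * (F B - F ∅) := by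
  induction ℓ with
  | zero => simp [hA.zero]
  | succ t ih =>
    calc F B - F (A (t + 1))
        ≤ (1 - 1 / (B.card : R)) * (F B - F (A t)) := hA.sub_succ_le hmono hF B t
      _ ≤ (1 - 1 / (B.card : R)) * ((1 - 1 / (B.card : R)) ^ t * (F B - F ∅)) :=
          mul_le_mul_of_nonneg_left ih (Nat.one_sub_one_div_cast_nonneg _)
      _ = (1 - 1 / (B.card : R)) ^ (t + 1) * (F B - F ∅) := by ring

end IsGreedySequence

theorem one_sub_one_div_pow_le_exp_neg (k ℓ : ℕ) :
    (1 - 1 / (k : ℝ)) ^ ℓ ≤ Real.exp (-(ℓ / k)) :=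
  calc (1 - 1 / (k : ℝ)) ^ ℓ
      ≤ Real.exp (-(1 / k)) ^ ℓ :=
        pow_le_pow_left₀ (Nat.one_sub_one_div_cast_nonneg k) (Real.one_sub_le_exp_neg _) ℓ
    _ = Real.exp (-(ℓ / k)) := by rw [← Real.exp_nat_mul]; ring_nf

theorem one_sub_one_div_pow_mul_le {k ℓ : ℕ} (hk : k ≠ 0) {M η : ℝ} (hM : 0 < M) (hη : 0 < η)
    (hℓ : k * Real.log (M / η) ≤ ℓ) : (1 - 1 / (k : ℝ)) ^ ℓ * M ≤ η := by
  have hlog : Real.log (M / η) ≤ ℓ / k := by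
    rwa [le_div_iff₀' (Nat.cast_pos.2 (Nat.pos_of_ne_zero hk))]
  calc (1 - 1 / (k : ℝ)) ^ ℓ * M
      ≤ Real.exp (-Real.log (M / η)) * M := by
        gcongr
        exact (one_sub_one_div_pow_le_exp_neg k ℓ).trans (Real.exp_le_exp.2 (neg_le_neg hlog))
    _ = η := by
        rw [Real.exp_neg, Real.exp_log (div_pos hM hη), inv_div, div_mul_cancel₀ _ hM.ne']

theorem IsGreedySequence.sub_le_of_card_mul_log_le {F : Finset X → ℝ} {A : ℕ → Finset X}
    (hA : IsGreedySequence F A) (hmono : Monotone F) (hF : IsSubmodular F) {B : Finset X}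
    {M η : ℝ} (hM : F B - F ∅ ≤ M) (hη : 0 < η) {ℓ : ℕ}
    (hℓ : B.card * Real.log (M / η) ≤ ℓ) : F B - F (A ℓ) ≤ η := by
  rcases (hmono (Finset.empty_subset B)).eq_or_lt with hgap | hgap
  · linarith [hmono (Finset.empty_subset (A ℓ))]
  have hcard : B.card ≠ 0 := fun h => hgap.ne (by rw [Finset.card_eq_zero.1 h])
  calc F B - F (A ℓ)
      ≤ (1 - 1 / (B.card : ℝ)) ^ ℓ * (F B - F ∅) := hA.sub_le_pow_mul hmono hF B ℓ
    _ ≤ (1 - 1 / (B.card : ℝ)) ^ ℓ * M :=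
        mul_le_mul_of_nonneg_left hM (pow_nonneg (Nat.one_sub_one_div_cast_nonneg _) ℓ)
    _ ≤ η := one_sub_one_div_pow_mul_le hcard ((sub_pos.2 hgap).trans_le hM) hη hℓ

end Greedy

section SoftCoverage

variable {X H R : Type*} [CommRing R]

theorem prod_add_prod_le_prod_union_add_prod_inter [PartialOrder R] [IsOrderedRing R]
    [DecidableEq X] {w : X → R} (hw : ∀ x, w x ∈ Set.Icc 0 1) (A B : Finset X) :
    ∏ x ∈ A, w x + ∏ x ∈ B, w x ≤ ∏ x ∈ A ∪ B, w x + ∏ x ∈ A ∩ B, w x := by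
  have hnonneg (s : Finset X) : 0 ≤ ∏ x ∈ s, w x := Finset.prod_nonneg fun x _ => (hw x).1
  have hle_one (s : Finset X) : ∏ x ∈ s, w x ≤ 1 :=
    Finset.prod_le_one (fun x _ => (hw x).1) fun x _ => (hw x).2
  have hA : (∏ x ∈ A ∩ B, w x) * ∏ x ∈ A \ B, w x = ∏ x ∈ A, w x :=
    Finset.prod_inter_mul_prod_sdiff A B w
  have hB : (∏ x ∈ A ∩ B, w x) * ∏ x ∈ B \ A, w x = ∏ x ∈ B, w x := by
    rw [Finset.inter_comm, Finset.prod_inter_mul_prod_sdiff]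
  have hunion : (∏ x ∈ A, w x) * ∏ x ∈ B \ A, w x = ∏ x ∈ A ∪ B, w x := by
    rw [← Finset.prod_union Finset.disjoint_sdiff, Finset.union_sdiff_self_eq_union]
  have hproduct : 0 ≤ (∏ x ∈ A ∩ B, w x) *
      ((1 - ∏ x ∈ A \ B, w x) * (1 - ∏ x ∈ B \ A, w x)) :=
    mul_nonneg (hnonneg _) (mul_nonneg (sub_nonneg.2 (hle_one _)) (sub_nonneg.2 (hle_one _)))
  rw [← hunion, ← hA, ← hB]
  linear_combination hproduct

variable [Fintype H]

/-- The total weight `c` removed by `A` when every `x ∈ A` multiplies the weight of `h` by `w h x`.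
For `w` valued in `{0, 1}` this is weighted coverage; the teaching surrogate is the case
`c h = P0 h * err h`, with `w h x` the likelihood if `h` errs on `x` and `1` otherwise. -/
def softCoverage (c : H → R) (w : H → X → R) (A : Finset X) : R :=
  ∑ h, c h * (1 - ∏ x ∈ A, w h x)

theorem softCoverage_empty (c : H → R) (w : H → X → R) : softCoverage c w ∅ = 0 := by
  simp [softCoverage]

variable [PartialOrder R] [IsOrderedRing R] {c : H → R} {w : H → X → R}

theorem softCoverage_le_sum (hc : ∀ h, 0 ≤ c h) (hw : ∀ h x, 0 ≤ w h x) (A : Finset X) :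
    softCoverage c w A ≤ ∑ h, c h :=
  Finset.sum_le_sum fun h _ => mul_le_of_le_one_right (hc h)
    (sub_le_self _ (Finset.prod_nonneg fun x _ => hw h x))

theorem monotone_softCoverage (hc : ∀ h, 0 ≤ c h) (hw : ∀ h x, w h x ∈ Set.Icc 0 1) :
    Monotone (softCoverage c w) := fun _ _ hAB =>
  Finset.sum_le_sum fun h _ => mul_le_mul_of_nonneg_left
    (sub_le_sub_left
      (Finset.prod_anti_set_of_le_one (fun x => (hw h x).1) (fun x => (hw h x).2) hAB) 1)
    (hc h)

theorem isSubmodular_softCoverage [DecidableEq X] (hc : ∀ h, 0 ≤ c h)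
    (hw : ∀ h x, w h x ∈ Set.Icc 0 1) : IsSubmodular (softCoverage c w) :=
  IsSubmodular.sum fun h _ => IsSubmodular.const_mul (hc := hc h) fun A B => by
    have hprod := prod_add_prod_le_prod_union_add_prod_inter (hw h) A B
    rw [Finset.sup_eq_union, Finset.inf_eq_inter]
    linear_combination hprod

end SoftCoverage

theorem stmt_8_general {X H : Type*} [DecidableEq X] [Fintype H]
    (P0 err : H → ℝ) (hP0 : ∀ h, 0 ≤ P0 h) (herr : ∀ h, 0 ≤ err h)
    (mistaken : H → X → Prop) [∀ h, DecidablePred (mistaken h)]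
    (lik : H → X → ℝ) (hlik : ∀ h x, mistaken h x → lik h x ∈ Set.Icc 0 1)
    (Q : H → Finset X → ℝ) (hQ : ∀ h A, Q h A = P0 h * ∏ x ∈ A with mistaken h x, lik h x)
    (F : Finset X → ℝ) (hF : ∀ A, F A = ∑ h, (P0 h - Q h A) * err h)
    (Etot : ℝ) (hEtot : Etot = ∑ h, P0 h * err h)
    {δ : ℝ} (hδ : 0 < δ) {B : Finset X} (hB : Etot - δ / 2 ≤ F B)
    {A : ℕ → Finset X} (hA : IsGreedySequence F A)
    {ℓ : ℕ} (hℓ : B.card * Real.log (2 * Etot / δ) ≤ ℓ) : Etot - δ ≤ F (A ℓ) := by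
  let c : H → ℝ := fun h => P0 h * err h
  let w : H → X → ℝ := fun h x => if mistaken h x then lik h x else 1
  have hc (h : H) : 0 ≤ c h := mul_nonneg (hP0 h) (herr h)
  have hw (h : H) (x : X) : w h x ∈ Set.Icc 0 1 := by
    by_cases hx : mistaken h x
    · simpa only [w, if_pos hx] using hlik h x hx
    · simp [w, hx]
  have hF_eq : F = softCoverage c w := funext fun A => by
    rw [hF]
    refine Finset.sum_congr rfl fun h _ => ?_
    rw [hQ, Finset.prod_filter]
    ring
  subst hF_eq
  have hgap : softCoverage c w B - softCoverage c w ∅ ≤ Etot := by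
    rw [softCoverage_empty, sub_zero, hEtot]
    exact softCoverage_le_sum hc (fun h x => (hw h x).1) B
  have hlog : B.card * Real.log (Etot / (δ / 2)) ≤ ℓ := by
    rwa [div_div_eq_mul_div, mul_comm Etot]
  linarith [hA.sub_le_of_card_mul_log_le (monotone_softCoverage hc hw)
    (isSubmodular_softCoverage hc hw) hgap (half_pos hδ) hlog]

/-- In the crowd-teaching setting: if some set of cardinality `k` has `F`-value at
least `E - P0(h*)·ε/2`, then greedy maximization of `F` reaches `F`-value at least
`E - P0(h*)·ε` after `ℓ ≥ k · ln(2E/(P0(h*)·ε))` iterations. -/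
theorem stmt_8
    {X H : Type*} [Fintype X] [Nonempty X] [Fintype H]
    (hyp : H → X → ℝ) (hnz : ∀ h x, hyp h x ≠ 0)
    (y : X → ℝ) (hy : ∀ x, y x = 1 ∨ y x = -1)
    (hstar : H) (hreal : ∀ x, Real.sign (hyp hstar x) = y x)
    (P0 : H → ℝ) (hP0pos : ∀ h, 0 < P0 h) (hP0sum : ∑ h, P0 h = 1)
    (α : ℝ) (hα : 0 < α)
    (Q : H → Finset X → ℝ)
    (hQ : ∀ h A, Q h A =
      P0 h * ∏ x ∈ A.filter (fun x => y x ≠ Real.sign (hyp h x)),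
        (1 / (1 + Real.exp (-(α * hyp h x * y x)))))
    (err : H → ℝ)
    (herr : ∀ h, err h =
      ((Finset.univ.filter
        (fun x => Real.sign (hyp h x) ≠ Real.sign (hyp hstar x))).card : ℝ)
        / (Fintype.card X : ℝ))
    (F : Finset X → ℝ)
    (hF : ∀ A, F A = ∑ h, (P0 h - Q h A) * err h)
    (Etot : ℝ) (hEtot : Etot = ∑ h, P0 h * err h) (hEpos : 0 < Etot)
    (ε : ℝ) (hε0 : 0 < P0 hstar * ε) (hε2 : P0 hstar * ε < 2 * Etot)
    (k : ℕ) (hk : ∃ B : Finset X, B.card = k ∧ F B ≥ Etot - P0 hstar * ε / 2)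
    (A : ℕ → Finset X) (hA0 : A 0 = ∅)
    (hAgreedy : ∀ t : ℕ, ∃ xt : X, A (t + 1) = insert xt (A t) ∧
      ∀ x : X, F (insert x (A t)) ≤ F (insert xt (A t))) :
    ∀ ℓ : ℕ, (ℓ : ℝ) ≥ (k : ℝ) * Real.log (2 * Etot / (P0 hstar * ε)) →
      F (A ℓ) ≥ Etot - P0 hstar * ε := by
  intro ℓ hℓ
  obtain ⟨B, rfl, hB⟩ := hk
  exact stmt_8_general P0 err (fun h => (hP0pos h).le) (fun h => by rw [herr]; positivity)
    (fun h x => y x ≠ Real.sign (hyp h x)) (fun h x => Real.sigmoid (α * hyp h x * y x))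
    (fun h x _ => ⟨Real.sigmoid_nonneg _, Real.sigmoid_le_one _⟩)
    Q (fun h A => by simp only [hQ, one_div, Real.sigmoid_def]) F hF Etot hEtot hε0 hB
    ⟨hA0, hAgreedy⟩ hℓ
end

section
/- (Correctness of the set-cover reduction in Proposition 1.) Let W be a finite nonempty set and S_1, …, S_n finite sets with ⋃_{j=1}^n S_j = W. Construct a teaching instance as follows: the hypothesis class is H = W ∪ {h*} (with h* ∉ W) with the uniform prior P0(h) = 1/(|W|+1); the example set is X = {x_1, …, x_n}; the target labels all examples negative, i.e. sign(h*(x_j)) = −1 and y(x_j) = −1 for all j; and each w ∈ W labels example x_j as sign(w(x_j)) = +1 if w ∈ S_j and −1 otherwise. The learner is noise-free (α = ∞): for A ⊆ {1,…,n}, the posterior is P_∞(h|A) = P0(h)·𝟙[sign(h(x_j)) = y(x_j) for all j ∈ A] / Σ_{h'∈H} P0(h')·𝟙[sign(h'(x_j)) = y(x_j) for all j ∈ A], and the expected error is E[err_L|A] = Σ_{h∈H} P_∞(h|A)·err(h,h*) with err(h,h*) = |{j : sign(h(x_j)) ≠ sign(h*(x_j))}|/n. Then E[err_L|A] < 1/((|W|+1)·n)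 if and only if ⋃_{j∈A} S_j = W. -/
open scoped Classical BigOperators

/-!
Each hypothesis inconsistent with the shown examples gets posterior mass zero, while conditioning
only increases the mass of every consistent one. If the prior is at least `δ` everywhere and each
error is zero or at least `ε`, the expected error is therefore zero when all consistent hypotheses
have zero error, and at least `δ * ε` otherwise. Here `ε = 1 / n`, so a small expected error means
that the shown examples single out the labelling of the target; in the set-cover instance the
hypothesis `w` is ruled out exactly when some shown `S j` contains it.
-/

section Posterior

variable {H K : Type*} [Field K] {prior err : H → K} {C : H → Prop} [DecidablePred C]

theorem prior_mul_indicator_nonneg [LinearOrder K] [IsStrictOrderedRing K]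
    (hprior : ∀ h, 0 ≤ prior h) (h : H) :
    0 ≤ prior h * (if C h then 1 else 0) :=
  mul_nonneg (hprior h) (by split_ifs <;> simp)

variable [Fintype H]

/-- The posterior of a noise-free Bayesian learner: `prior` restricted to the hypotheses satisfying
the consistency predicate `C` and renormalized. It is identically `0` if no mass is consistent. -/
def posterior (prior : H → K) (C : H → Prop) [DecidablePred C] (h : H) : K :=
  prior h * (if C h then 1 else 0) / ∑ h', prior h' * (if C h' then 1 else 0)

/-- The expectation of `err` under the posterior obtained from `prior` by conditioning on `C`. -/
def posteriorMean (prior : H → K) (C : H → Prop) [DecidablePred C] (err : H → K) : K :=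
  ∑ h, posterior prior C h * err h

theorem posteriorMean_eq_zero (herr : ∀ h, C h → err h = 0) : posteriorMean prior C err = 0 := by
  refine Finset.sum_eq_zero fun h _ => ?_
  by_cases hC : C h
  · rw [herr h hC, mul_zero]
  · simp [posterior, hC]

variable [LinearOrder K] [IsStrictOrderedRing K]

theorem posterior_nonneg (hprior : ∀ h, 0 ≤ prior h) (h : H) : 0 ≤ posterior prior C h :=
  div_nonneg (prior_mul_indicator_nonneg hprior h)
    (Finset.sum_nonneg fun h' _ => prior_mul_indicator_nonneg hprior h')

theorem prior_le_posterior (hprior : ∀ h, 0 ≤ prior h) (hsum : ∑ h, prior h ≤ 1) {h : H}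
    (hC : C h) : prior h ≤ posterior prior C h := by
  obtain hzero | hpos := (hprior h).eq_or_lt
  · exact hzero ▸ posterior_nonneg hprior h
  have hle_normalizer : prior h ≤ ∑ h', prior h' * (if C h' then 1 else 0) := by
    simpa [hC] using Finset.single_le_sum
      (fun h' _ => prior_mul_indicator_nonneg (C := C) hprior h') (Finset.mem_univ h)
  have hnormalizer_le : ∑ h', prior h' * (if C h' then 1 else 0) ≤ 1 := by
    refine (Finset.sum_le_sum fun h' _ => ?_).trans hsum
    exact mul_le_of_le_one_right (hprior h') (by split_ifs <;> simp)
  rw [posterior, if_pos hC, mul_one]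
  exact le_div_self hpos.le (hpos.trans_le hle_normalizer) hnormalizer_le

theorem prior_mul_le_posteriorMean (hprior : ∀ h, 0 ≤ prior h) (hsum : ∑ h, prior h ≤ 1)
    (herr : ∀ h, 0 ≤ err h) {h : H} (hC : C h) :
    prior h * err h ≤ posteriorMean prior C err :=
  calc prior h * err h
    _ ≤ posterior prior C h * err h :=
      mul_le_mul_of_nonneg_right (prior_le_posterior hprior hsum hC) (herr h)
    _ ≤ posteriorMean prior C err :=
      Finset.single_le_sum (f := fun h => posterior prior C h * err h)
        (fun h' _ => mul_nonneg (posterior_nonneg hprior h') (herr h')) (Finset.mem_univ h)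

theorem posteriorMean_lt_mul_iff {δ ε : K} (hδ : 0 < δ) (hprior : ∀ h, δ ≤ prior h)
    (hsum : ∑ h, prior h ≤ 1) (hε : 0 < ε) (herr : ∀ h, err h = 0 ∨ ε ≤ err h) :
    posteriorMean prior C err < δ * ε ↔ ∀ h, C h → err h = 0 := by
  refine ⟨fun hlt h hC => (herr h).resolve_right fun hge => hlt.not_ge ?_, fun hzero => ?_⟩
  · have herr_nonneg (h' : H) : 0 ≤ err h' := (herr h').elim Eq.ge hε.le.trans
    calc δ * ε
      _ ≤ prior h * err h := mul_le_mul (hprior h) hge hε.le (hδ.le.trans (hprior h))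
      _ ≤ posteriorMean prior C err :=
        prior_mul_le_posteriorMean (fun h' => hδ.le.trans (hprior h')) hsum herr_nonneg hC
  · rw [posteriorMean_eq_zero hzero]
    exact mul_pos hδ hε

end Posterior

section ErrorRate

variable {X Y : Type*} [Fintype X] [DecidableEq Y]

/-- The fraction of the examples on which the labellings `f` and `g` disagree. -/
def errorRate (K : Type*) [Field K] (f g : X → Y) : K :=
  hammingDist f g / Fintype.card X

variable {K : Type*} [Field K]

theorem errorRate_eq_zero_iff [CharZero K] {f g : X → Y} : errorRate K f g = 0 ↔ f = g := by
  refine ⟨fun hzero => ?_, fun hfg => by simp [errorRate, hfg]⟩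
  obtain hdist | hcard := div_eq_zero_iff.mp hzero
  · exact hammingDist_eq_zero.mp (Nat.cast_eq_zero.mp hdist)
  · have : IsEmpty X := Fintype.card_eq_zero_iff.mp (Nat.cast_eq_zero.mp hcard)
    exact Subsingleton.elim f g

theorem errorRate_eq_zero_or_one_div_card_le [LinearOrder K] [IsStrictOrderedRing K]
    (f g : X → Y) :
    errorRate K f g = 0 ∨ 1 / (Fintype.card X : K) ≤ errorRate K f g := by
  refine (eq_or_ne f g).imp errorRate_eq_zero_iff.mpr fun hne => ?_
  have hone_le : (1 : K) ≤ hammingDist f g := by exact_mod_cast hammingDist_pos.mpr hne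
  exact div_le_div_of_nonneg_right hone_le (Nat.cast_nonneg _)

end ErrorRate

section Teaching

variable {H X Y W K : Type*}

/-- `A` is a teaching set for the target hypothesis `t`: any hypothesis that labels the examples in
`A` as `t` does has the same labels as `t` everywhere. -/
def IsTeachingSet (label : H → X → Y) (t : H) (A : Set X) : Prop :=
  ∀ h, A.EqOn (label h) (label t) → label h = label t

/-- The expected error of the noise-free Bayesian learner who has been shown the examples in `A`,
labelled by the target hypothesis `t`. -/
noncomputable def expectedError [Fintype H] [Fintype X] [DecidableEq Y] [Field K]
    (prior : H → K) (label : H → X → Y) (t : H) (A : Set X) : K :=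
  posteriorMean prior (fun h => A.EqOn (label h) (label t))
    (fun h => errorRate K (label h) (label t))

theorem isTeachingSet_none_iff_cover {S : X → Set W} (hcover : ∀ v, ∃ j, v ∈ S j)
    {label : Option W → X → Y} (hlabel : ∀ v j, label (some v) j = label none j ↔ v ∉ S j)
    (A : Set X) : IsTeachingSet label none A ↔ ∀ v, ∃ j ∈ A, v ∈ S j := by
  have hne_target (v : W) : label (some v) ≠ label none := fun heq =>
    let ⟨j, hj⟩ := hcover v
    (hlabel v j).mp (congrFun heq j) hj
  simp [IsTeachingSet, Option.forall, hne_target, Set.EqOn, hlabel]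

variable [Fintype X] [Nonempty X] [DecidableEq Y] [Field K] [LinearOrder K] [IsStrictOrderedRing K]
  {δ : K}

theorem expectedError_lt_iff_isTeachingSet [Fintype H] {prior : H → K} (hδ : 0 < δ)
    (hprior : ∀ h, δ ≤ prior h) (hsum : ∑ h, prior h ≤ 1) (label : H → X → Y) (t : H) (A : Set X) :
    expectedError prior label t A < δ / Fintype.card X ↔ IsTeachingSet label t A := by
  have hcard : (0 : K) < 1 / Fintype.card X :=
    one_div_pos.mpr (Nat.cast_pos.mpr Fintype.card_pos)
  rw [div_eq_mul_one_div]
  refine (posteriorMean_lt_mul_iff hδ hprior hsum hcard fun h =>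
    errorRate_eq_zero_or_one_div_card_le (label h) (label t)).trans ?_
  simp only [errorRate_eq_zero_iff, IsTeachingSet]

theorem stmt_17_general [Fintype W] {S : X → Set W} (hcover : ∀ v, ∃ j, v ∈ S j)
    {label : Option W → X → Y} (hlabel : ∀ v j, label (some v) j = label none j ↔ v ∉ S j)
    {prior : Option W → K} (hδ : 0 < δ) (hprior : ∀ h, δ ≤ prior h) (hsum : ∑ h, prior h ≤ 1)
    (A : Set X) :
    expectedError prior label none A < δ / Fintype.card X ↔ ∀ v, ∃ j ∈ A, v ∈ S j :=
  (expectedError_lt_iff_isTeachingSet hδ hprior hsum label none A).trans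
    (isTeachingSet_none_iff_cover hcover hlabel A)

end Teaching

/-- Correctness of the set-cover reduction (Proposition 1): in the constructed
noise-free teaching instance, the expected learner error after showing the examples
indexed by `A` is below `1/((|W|+1)·n)` if and only if the sets indexed by `A`
cover `W`. -/
theorem stmt_17
    {W : Type*} [Fintype W] [Nonempty W] {n : ℕ} (hn : 0 < n)
    (S : Fin n → Finset W)
    (hcover : ∀ v : W, ∃ j : Fin n, v ∈ S j)
    (sgn : Option W → Fin n → ℝ)
    (hsgn_star : ∀ j, sgn none j = -1)
    (hsgn_w : ∀ (v : W) (j : Fin n), sgn (some v) j = if v ∈ S j then 1 else -1)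
    (P0 : Option W → ℝ) (hP0 : ∀ h, P0 h = 1 / (Fintype.card W + 1))
    (Pinf : Option W → Finset (Fin n) → ℝ)
    (hPinf : ∀ h A, Pinf h A =
      P0 h * (if ∀ j ∈ A, sgn h j = -1 then (1 : ℝ) else 0)
        / ∑ h', P0 h' * (if ∀ j ∈ A, sgn h' j = -1 then (1 : ℝ) else 0))
    (err : Option W → ℝ)
    (herr : ∀ h, err h =
      ((Finset.univ.filter (fun j : Fin n => sgn h j ≠ sgn none j)).card : ℝ) / n)
    (Err : Finset (Fin n) → ℝ)
    (hErr : ∀ A, Err A = ∑ h, Pinf h A * err h) :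
    ∀ A : Finset (Fin n),
      Err A < 1 / ((Fintype.card W + 1) * n) ↔ ∀ v : W, ∃ j ∈ A, v ∈ S j := by
  intro A
  have : Nonempty (Fin n) := Fin.pos_iff_nonempty.mp hn
  have hlabel (v : W) (j : Fin n) : sgn (some v) j = sgn none j ↔ v ∉ S j := by
    rw [hsgn_w, hsgn_star]
    split_ifs with hv <;> norm_num [hv]
  have hsum : ∑ h, P0 h ≤ 1 := by
    simp only [hP0, Finset.sum_const, Finset.card_univ, Fintype.card_option, nsmul_eq_mul]
    push_cast
    exact (mul_one_div_cancel (by positivity)).le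
  have hErr_eq : Err A = expectedError P0 sgn none A := by
    simp [hErr, hPinf, herr, expectedError, posteriorMean, posterior, errorRate, hammingDist,
      Set.EqOn, hsgn_star]
  have hreduction := stmt_17_general (S := fun j => (S j : Set W)) hcover hlabel
    (δ := 1 / (Fintype.card W + 1 : ℝ)) (by positivity) (fun h => (hP0 h).ge) hsum A
  rwa [Fintype.card_fin, div_div, ← hErr_eq] at hreduction
end
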